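/- arXiv:math/0403092 — 2 statements merged into one kernel-verified Lean document; each statement's English description precedes it below -/
import Mathlib

section
/- In the ring ℚ[[q]] of formal power series, (1 − Y)(1 + Z) = 1, where Y = Σ_{n≥1} (n^{n−1}/n!) q^n and Z = Σ_{n≥1} (n^n/n!) q^n. -/
/-!
Since `1 + Z = ∑ (nⁿ / n!) qⁿ`, the claim amounts to `Y * (1 + Z) = Z`, whose coefficients form an
instance of Abel's generalisation of the binomial theorem. To prove Abel's identity, expand
`(x - (a + k)) ^ (n - k)` in powers of `x`: up to its `k = 0` term, the coefficient of each power is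
a multiple of the forward difference of order `m + 1` of the polynomial `(a + k) ^ m` in `k`, which
vanishes.
-/

/-- `Y = Σ_{n≥1} (n^{n-1}/n!) qⁿ` as a formal power series over `ℚ`. -/
noncomputable def Yq : PowerSeries ℚ :=
  PowerSeries.mk fun n => if n = 0 then 0 else (n : ℚ) ^ (n - 1) / n.factorial

/-- `Z = Σ_{n≥1} (nⁿ/n!) qⁿ` as a formal power series over `ℚ`. -/
noncomputable def Zq : PowerSeries ℚ :=
  PowerSeries.mk fun n => if n = 0 then 0 else (n : ℚ) ^ n / n.factorial

open Finset

section AbelIdentity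

theorem sum_antidiagonal_antidiagonal_left_comm {A M : Type*} [AddCommMonoid A]
    [HasAntidiagonal A] [AddCommMonoid M] (f : A → A → A → M) (n : A) :
    ∑ p ∈ antidiagonal n, ∑ q ∈ antidiagonal p.2, f p.1 q.1 q.2 =
      ∑ p ∈ antidiagonal n, ∑ q ∈ antidiagonal p.2, f q.1 p.1 q.2 := by
  rw [sum_sigma', sum_sigma']
  refine sum_nbij' (fun ⟨⟨i, _⟩, ⟨j, k⟩⟩ ↦ ⟨(j, i + k), (i, k)⟩)
    (fun ⟨⟨j, _⟩, ⟨i, k⟩⟩ ↦ ⟨(i, j + k), (j, k)⟩) ?_ ?_ ?_ ?_ ?_ <;>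
    simp +contextual [add_left_comm]

theorem choose_add_mul_choose_add (i j k : ℕ) :
    (i + (j + k)).choose i * (j + k).choose j = (i + (j + k)).choose j * (i + k).choose i := by
  have h := Nat.choose_mul (n := i + (j + k)) (Nat.le_add_right j k)
  rwa [Nat.add_sub_cancel_left, Nat.add_left_comm, Nat.add_sub_cancel_left, ← Nat.choose_symm_add,
    Nat.add_left_comm, ← Nat.choose_symm_add] at h

variable {R : Type*} [CommRing R]

theorem sum_antidiagonal_neg_one_pow_mul_choose_mul_add_pow_eq_zero {m n : ℕ} (h : m < n) (a : R) :
    ∑ p ∈ antidiagonal n, (-1) ^ p.2 * (n.choose p.1 : R) * (a + p.1) ^ m = 0 := by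
  have hΔ := congrFun (fwdDiff_iter_pow_eq_zero_of_lt (R := R) h) a
  rw [fwdDiff_iter_eq_sum_shift] at hΔ
  simpa [Nat.sum_antidiagonal_eq_sum_range_succ_mk] using hΔ

theorem sum_antidiagonal_neg_one_pow_mul_choose_succ_mul_add_pow (a : R) (m : ℕ) :
    ∑ p ∈ antidiagonal m, (-1) ^ p.2 * ((m + 1).choose (p.1 + 1) : R) * (a + (p.1 + 1)) ^ m =
      (-a) ^ m := by
  have h := sum_antidiagonal_neg_one_pow_mul_choose_mul_add_pow_eq_zero m.lt_succ_self a
  rw [Nat.sum_antidiagonal_succ] at h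
  push_cast at h
  simp only [Nat.choose_zero_right, Nat.cast_one, add_zero, mul_one] at h
  linear_combination h - neg_pow a m

/- This is Abel's identity divided by `a`, which unlike the identity itself has content at `a = 0`:
`a` times the right-hand side is `x ^ (n + 1) - (x - a) ^ (n + 1)`. -/
theorem sum_antidiagonal_choose_succ_mul_add_pow_mul_sub_pow (a x : R) (n : ℕ) :
    ∑ p ∈ antidiagonal n,
        ((n + 1).choose (p.1 + 1) : R) * (a + (p.1 + 1)) ^ p.1 * (x - (a + (p.1 + 1))) ^ p.2 =
      ∑ p ∈ antidiagonal n, ((n + 1).choose p.1 : R) * x ^ p.1 * (-a) ^ p.2 := by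
  let f (i j k : ℕ) : R := ((i + 1 + (j + k)).choose (i + 1) * (j + k).choose j : ℕ) *
    (x ^ j * ((-1) ^ k * (a + (i + 1)) ^ (i + k)))
  calc
    _ = ∑ p ∈ antidiagonal n, ∑ q ∈ antidiagonal p.2, f p.1 q.1 q.2 := by
      refine sum_congr rfl fun p hp ↦ ?_
      rw [sub_eq_add_neg, (Commute.all x (-(a + (p.1 + 1)))).add_pow', mul_sum]
      refine sum_congr rfl fun q hq ↦ ?_
      obtain rfl := mem_antidiagonal.mp hp
      simp only [f, mem_antidiagonal.mp hq, nsmul_eq_mul, neg_pow (a + _), pow_add,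
        Nat.add_right_comm p.1 1]
      push_cast
      ring
    _ = ∑ p ∈ antidiagonal n, ∑ q ∈ antidiagonal p.2, f q.1 p.1 q.2 :=
      sum_antidiagonal_antidiagonal_left_comm f n
    _ = _ := by
      refine sum_congr rfl fun p hp ↦ ?_
      rw [← sum_antidiagonal_neg_one_pow_mul_choose_succ_mul_add_pow, mul_sum]
      refine sum_congr rfl fun q hq ↦ ?_
      obtain rfl := mem_antidiagonal.mp hp
      simp only [f, choose_add_mul_choose_add, ← mem_antidiagonal.mp hq]
      rw [show q.1 + 1 + (p.1 + q.2) = p.1 + (q.1 + q.2) + 1 by ring, Nat.add_right_comm q.1 1]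
      push_cast
      ring

theorem sum_antidiagonal_choose_succ_mul_pow_mul_sub_pow (x : R) (n : ℕ) :
    ∑ p ∈ antidiagonal n,
        ((n + 1).choose (p.1 + 1) : R) * (p.1 + 1) ^ p.1 * (x - (p.1 + 1)) ^ p.2 =
      (n + 1) * x ^ n := by
  have h := sum_antidiagonal_choose_succ_mul_add_pow_mul_sub_pow 0 x n
  simp only [zero_add, neg_zero] at h
  rw [h, sum_eq_single_of_mem (n, 0) (by simp)]
  · simp
  · rintro ⟨i, j⟩ hij hne
    have : j ≠ 0 := by rintro rfl; simp_all
    simp [this]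

theorem sum_antidiagonal_choose_succ_mul_pow_mul_add_pow (x : R) (n : ℕ) :
    ∑ p ∈ antidiagonal n,
        ((n + 1).choose (p.1 + 1) : R) * (p.1 + 1) ^ p.1 * (x + p.2) ^ p.2 =
      (n + 1) * (x + (n + 1)) ^ n := by
  rw [← sum_antidiagonal_choose_succ_mul_pow_mul_sub_pow]
  refine sum_congr rfl fun p hp ↦ ?_
  rw [← mem_antidiagonal.mp hp]
  push_cast
  ring

end AbelIdentity

section ExpGenFun

variable {K : Type*} [Semifield K]

/-- The exponential generating function `∑ (a n / n!) qⁿ` of a sequence `a`, for which products of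
power series become binomial convolutions of sequences. Division by `n!` is meant in
characteristic zero; otherwise `a n / n!` is `0` when `n!` vanishes. -/
def expGenFun (a : ℕ → K) : PowerSeries K :=
  PowerSeries.mk fun n ↦ a n / n.factorial

theorem expGenFun_mul [CharZero K] (a b : ℕ → K) :
    expGenFun a * expGenFun b =
      expGenFun fun n ↦ ∑ p ∈ antidiagonal n, (n.choose p.1 : K) * a p.1 * b p.2 := by
  ext n
  simp only [expGenFun, PowerSeries.coeff_mul, PowerSeries.coeff_mk, sum_div]
  refine sum_congr rfl fun p hp ↦ ?_
  obtain rfl := mem_antidiagonal.mp hp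
  have := Nat.cast_ne_zero (R := K).mpr (p.1 + p.2).factorial_ne_zero
  rw [Nat.cast_add_choose]
  field_simp

end ExpGenFun

theorem Yq_eq_expGenFun : Yq = expGenFun fun n ↦ if n = 0 then 0 else (n : ℚ) ^ (n - 1) := by
  ext n
  simp [Yq, expGenFun, ite_div]

theorem Zq_eq_expGenFun : Zq = expGenFun fun n ↦ n * (n : ℚ) ^ (n - 1) := by
  ext n
  cases n <;> simp [Zq, expGenFun, pow_succ']

theorem one_add_Zq_eq_expGenFun : 1 + Zq = expGenFun fun n ↦ (n : ℚ) ^ n := by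
  ext n
  cases n <;> simp [Zq, expGenFun, PowerSeries.coeff_one]

theorem Yq_mul_expGenFun_add_pow (x : ℚ) :
    Yq * expGenFun (fun n ↦ (x + n) ^ n) = expGenFun fun n ↦ n * (x + n) ^ (n - 1) := by
  rw [Yq_eq_expGenFun, expGenFun_mul]
  congr 1 with n
  cases n with
  | zero => simp
  | succ n =>
    rw [Nat.sum_antidiagonal_succ]
    simpa using sum_antidiagonal_choose_succ_mul_pow_mul_add_pow x n

theorem Yq_mul_one_add_Zq : Yq * (1 + Zq) = Zq := by
  rw [one_add_Zq_eq_expGenFun, Zq_eq_expGenFun]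
  simpa using Yq_mul_expGenFun_add_pow 0

theorem one_sub_Y_mul_one_add_Z : (1 - Yq) * (1 + Zq) = 1 := by
  rw [sub_mul, one_mul, Yq_mul_one_add_Zq, add_sub_cancel_right]
end

section
/- For every integer n ≥ 1, A_n = n! · Σ_{k=0}^{n−2} n^k/k! (for n = 1 the right-hand sum is empty and both sides equal 0). -/
/-- `Aₙ = Σ_{p+s=n, p,s ≥ 1} (n!/(p!·s!)) pᵖ sˢ`, as a rational number. -/
noncomputable def Aseq (n : ℕ) : ℚ :=
  ∑ p ∈ Finset.Ioo 0 n,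
    (n.factorial : ℚ) / (p.factorial * (n - p).factorial) * p ^ p * (n - p) ^ (n - p)

/-!
Expanding `(y - p) ^ (n - p) = ((x + y) - (x + p)) ^ (n - p)` in powers of `x + y` and exchanging
the sums, the coefficient of `(x + y) ^ j` in `∑ₚ C(n, p) (x + p) ^ p (y - p) ^ (n - p)` becomes
`C(n, j)` times the `(n - j)`-th forward difference of `t ↦ t ^ (n - j)`, which is `(n - j)!`.
At `x = 0`, `y = n` the terms `p = 0` and `p = n`, absent from `Aₙ`, contribute `nⁿ` each, and so do
the terms `j = n - 1` and `j = n`.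
-/

open Finset Nat

theorem choose_mul_choose_sub_comm (n p j : ℕ) :
    n.choose p * (n - p).choose j = n.choose j * (n - j).choose p := by
  have hp := Nat.choose_mul (n := n) (Nat.le_add_right p j)
  have hj := Nat.choose_mul (n := n) (Nat.le_add_left j p)
  rw [Nat.add_sub_cancel_left] at hp
  rw [Nat.add_sub_cancel] at hj
  rw [← hp, ← hj, Nat.choose_symm_add]

section CommRing

variable {R : Type*} [CommRing R]

theorem sum_neg_one_pow_mul_choose_mul_add_pow (n : ℕ) (x : R) :
    ∑ p ∈ range (n + 1), (-1) ^ (n - p) * (n.choose p : R) * (x + p) ^ n = n ! := by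
  simpa [fwdDiff_iter_eq_sum_shift] using congrFun (fwdDiff_iter_eq_factorial (R := R) (n := n)) x

theorem choose_mul_pow_mul_neg_pow_mul_choose {n p j : ℕ} (h : p + j ≤ n) (a b : R) :
    (n.choose p : R) * a ^ p * (b ^ j * (-a) ^ (n - p - j) * (n - p).choose j) =
      n.choose j * b ^ j * ((-1) ^ (n - j - p) * (n - j).choose p * a ^ (n - j)) := by
  have hchoose : (n.choose p : R) * (n - p).choose j = n.choose j * (n - j).choose p :=
    mod_cast congrArg (Nat.cast (R := R)) (choose_mul_choose_sub_comm n p j)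
  have hpow : a ^ (n - j) = a ^ p * a ^ (n - j - p) := by
    rw [← pow_add, Nat.add_sub_cancel' (by lia)]
  rw [hpow, Nat.sub_right_comm n p j, neg_pow]
  linear_combination b ^ j * (-1) ^ (n - j - p) * a ^ p * a ^ (n - j - p) * hchoose

theorem sum_choose_mul_add_pow_mul_sub_pow (n : ℕ) (x y : R) :
    ∑ p ∈ range (n + 1), (n.choose p : R) * (x + p) ^ p * (y - p) ^ (n - p) =
      ∑ j ∈ range (n + 1), (n.choose j : R) * (n - j)! * (x + y) ^ j := by
  calc ∑ p ∈ range (n + 1), (n.choose p : R) * (x + p) ^ p * (y - p) ^ (n - p)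
    _ = ∑ p ∈ range (n + 1), ∑ j ∈ range (n - p + 1), (n.choose p : R) * (x + p) ^ p *
          ((x + y) ^ j * (-(x + p)) ^ (n - p - j) * (n - p).choose j) := by
      refine sum_congr rfl fun p _ ↦ ?_
      rw [← mul_sum, ← add_pow, ← sub_eq_add_neg, add_sub_add_left_eq_sub]
    _ = ∑ j ∈ range (n + 1), ∑ p ∈ range (n - j + 1), (n.choose p : R) * (x + p) ^ p *
          ((x + y) ^ j * (-(x + p)) ^ (n - p - j) * (n - p).choose j) :=
      sum_comm' fun p j ↦ by simp only [mem_range]; lia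
    _ = ∑ j ∈ range (n + 1), (n.choose j : R) * (x + y) ^ j *
          ∑ p ∈ range (n - j + 1), (-1) ^ (n - j - p) * ((n - j).choose p : R) *
            (x + p) ^ (n - j) := by
      simp only [mul_sum]
      refine sum_congr rfl fun j hj ↦ sum_congr rfl fun p hp ↦
        choose_mul_pow_mul_neg_pow_mul_choose ?_ (x + p) (x + y)
      rw [mem_range] at hj hp
      lia
    _ = ∑ j ∈ range (n + 1), (n.choose j : R) * (n - j)! * (x + y) ^ j := by
      simp only [sum_neg_one_pow_mul_choose_mul_add_pow]
      exact sum_congr rfl fun j _ ↦ mul_right_comm _ _ _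

end CommRing

theorem choose_mul_factorial_sub_eq_div {K : Type*} [DivisionRing K] [CharZero K] {n j : ℕ}
    (h : j ≤ n) : (n.choose j : K) * (n - j)! = n ! / j ! := by
  rw [eq_div_iff (by exact_mod_cast j.factorial_ne_zero)]
  exact_mod_cast (Nat.mul_right_comm _ _ _).trans (Nat.choose_mul_factorial_mul_factorial h)

theorem Aseq_add_two_mul_pow {n : ℕ} (hn : 1 ≤ n) :
    Aseq n + 2 * (n : ℚ) ^ n =
      ∑ p ∈ range (n + 1), (n.choose p : ℚ) * (p : ℚ) ^ p * (n - p) ^ (n - p) := by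
  have hA : Aseq n = ∑ p ∈ Ioo 0 n, (n.choose p : ℚ) * (p : ℚ) ^ p * (n - p) ^ (n - p) :=
    sum_congr rfl fun p hp ↦ by rw [Nat.cast_choose ℚ (mem_Ioo.1 hp).2.le]
  rw [sum_range_succ, range_eq_Ico, ← sum_Ioo_add_eq_sum_Ico hn, ← hA]
  simp only [Nat.choose_zero_right, Nat.choose_self, Nat.cast_zero, Nat.cast_one, Nat.sub_zero,
    Nat.sub_self, sub_zero, sub_self, pow_zero]
  ring

theorem factorial_mul_sum_range_succ_pow_div {K : Type*} [Field K] [CharZero K] {n : ℕ}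
    (hn : 1 ≤ n) :
    (n ! : K) * ∑ k ∈ range (n + 1), (n : K) ^ k / k ! =
      n ! * ∑ k ∈ range (n - 1), (n : K) ^ k / k ! + 2 * (n : K) ^ n := by
  obtain ⟨m, rfl⟩ := Nat.exists_eq_add_of_le' hn
  have hm : (m ! : K) ≠ 0 := mod_cast m.factorial_ne_zero
  have hm' : ((m : K) + 1) ≠ 0 := mod_cast m.succ_ne_zero
  rw [Nat.add_sub_cancel, sum_range_succ, sum_range_succ, Nat.factorial_succ]
  push_cast
  field_simp
  ring

/-- For every `n ≥ 1`, `Aₙ = n! · Σ_{k=0}^{n-2} nᵏ/k!`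
(for `n = 1` the sum is empty and both sides are `0`). -/
theorem Aseq_eq_factorial_mul_sum (n : ℕ) (hn : 1 ≤ n) :
    Aseq n = (n.factorial : ℚ) * ∑ k ∈ Finset.range (n - 1), (n : ℚ) ^ k / k.factorial := by
  refine add_right_cancel (b := 2 * (n : ℚ) ^ n) ?_
  calc Aseq n + 2 * (n : ℚ) ^ n
    _ = ∑ p ∈ range (n + 1), (n.choose p : ℚ) * (p : ℚ) ^ p * (n - p) ^ (n - p) :=
      Aseq_add_two_mul_pow hn
    _ = ∑ j ∈ range (n + 1), (n.choose j : ℚ) * (n - j)! * (n : ℚ) ^ j := by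
      simpa only [zero_add] using sum_choose_mul_add_pow_mul_sub_pow n 0 (n : ℚ)
    _ = n ! * ∑ j ∈ range (n + 1), (n : ℚ) ^ j / j ! := by
      rw [mul_sum]
      refine sum_congr rfl fun j hj ↦ ?_
      rw [choose_mul_factorial_sub_eq_div (mem_range_succ_iff.1 hj), div_mul_eq_mul_div,
        mul_div_assoc]
    _ = n ! * ∑ k ∈ range (n - 1), (n : ℚ) ^ k / k ! + 2 * (n : ℚ) ^ n :=
      factorial_mul_sum_range_succ_pow_div hn
end
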